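/- arXiv:2110.01838 — 2 statements merged into one kernel-verified Lean document; each statement's English description precedes it below -/
import Mathlib

section
/- Let n ≥ 3 and let S be a connected dominating set of the flower snark J_n. Then there is no index i such that the copies J^i, J^{i+1}, J^{i+2} have weights 1, 1, 1 in S, and there is no index i such that the copies J^i, J^{i+1}, …, J^{i+6} have weights 1, 3, 1, 2, 1, 3, 1 in S (all indices mod n). -/
/-- Vertices of the flower snark `J_n`: a copy index `i : Fin n` together with
one of the four vertices of the copy: `0 = a`, `1 = b`, `2 = c`, `3 = d`. -/
abbrev FV (n : ℕ) := Fin n × Fin 4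

/-- The flower snark `J_n`: in each copy, `a^i` is adjacent to `b^i, c^i, d^i`;
the `b` vertices form an `n`-cycle; the `c` and `d` vertices form a `2n`-cycle
via the paths `c^i c^{i+1}`, `d^i d^{i+1}` (for `1 ≤ i ≤ n-1`) together with the
twist edges `c^n d^1` and `d^n c^1`. -/
def flowerSnark (n : ℕ) : SimpleGraph (FV n) :=
  SimpleGraph.fromRel (fun v w =>
    (v.1 = w.1 ∧ v.2 = 0 ∧ w.2 ≠ 0) ∨
    (((v.1 : ℕ) + 1) % n = (w.1 : ℕ) ∧ v.2 = 1 ∧ w.2 = 1) ∨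
    ((v.1 : ℕ) + 1 = (w.1 : ℕ) ∧ v.2 = 2 ∧ w.2 = 2) ∨
    ((v.1 : ℕ) + 1 = (w.1 : ℕ) ∧ v.2 = 3 ∧ w.2 = 3) ∨
    ((v.1 : ℕ) = n - 1 ∧ (w.1 : ℕ) = 0 ∧ v.2 = 2 ∧ w.2 = 3) ∨
    ((v.1 : ℕ) = n - 1 ∧ (w.1 : ℕ) = 0 ∧ v.2 = 3 ∧ w.2 = 2))

/-- `S` is a dominating set of `J_n`. -/
def Dominating (n : ℕ) (S : Set (FV n)) : Prop :=
  ∀ v ∉ S, ∃ w ∈ S, (flowerSnark n).Adj v w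

/-- `S` is a minimal dominating set of `J_n`. -/
def MinimalDominating (n : ℕ) (S : Set (FV n)) : Prop :=
  Dominating n S ∧ ∀ T : Set (FV n), T ⊂ S → ¬ Dominating n T

/-- `S` is an independent set of `J_n`. -/
def IndependentSet (n : ℕ) (S : Set (FV n)) : Prop :=
  ∀ v ∈ S, ∀ w ∈ S, ¬ (flowerSnark n).Adj v w

/-- `S` is a 2-dominating set of `J_n`: every vertex outside `S` has at least
two neighbours in `S`. -/
def TwoDominating (n : ℕ) (S : Set (FV n)) : Prop :=
  ∀ v ∉ S, ∃ w₁ ∈ S, ∃ w₂ ∈ S, w₁ ≠ w₂ ∧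
    (flowerSnark n).Adj v w₁ ∧ (flowerSnark n).Adj v w₂

/-- `S` is a total dominating set of `J_n`. -/
def TotalDominating (n : ℕ) (S : Set (FV n)) : Prop :=
  ∀ v : FV n, ∃ w ∈ S, (flowerSnark n).Adj v w

/-- `S` is a connected dominating set of `J_n`. -/
def ConnectedDominating (n : ℕ) (S : Set (FV n)) : Prop :=
  Dominating n S ∧ ((flowerSnark n).induce S).Connected

/-- `S` is a secure dominating set of `J_n`. -/
def SecureDominating (n : ℕ) (S : Set (FV n)) : Prop :=
  Dominating n S ∧ ∀ v ∉ S, ∃ w ∈ S,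
    (flowerSnark n).Adj v w ∧ Dominating n (insert v (S \ {w}))

/-- `v` is undefended with respect to `f`: neither `v` nor any of its
neighbours carries a guard. -/
def Undefended (n : ℕ) (f : FV n → ℕ) (v : FV n) : Prop :=
  f v = 0 ∧ ∀ w, (flowerSnark n).Adj v w → f w = 0

/-- `f` is a weak Roman dominating function on `J_n`: `f` takes values in
`{0,1,2}`, has no undefended vertex, and every vertex `v` with `f v = 0` has a
neighbour `w` with `f w ≥ 1` such that moving one guard from `w` to `v` leaves
no undefended vertex. -/
def WeakRomanDominating (n : ℕ) (f : FV n → ℕ) : Prop :=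
  (∀ v, f v ≤ 2) ∧ (∀ v, ¬ Undefended n f v) ∧
  ∀ v, f v = 0 → ∃ w, (flowerSnark n).Adj v w ∧ 1 ≤ f w ∧
    ∀ u, ¬ Undefended n
      (fun x => if x = v then 1 else if x = w then f w - 1 else f x) u

/-- The domination number of `J_n`. -/
noncomputable def dominationNumber (n : ℕ) : ℕ :=
  sInf {k | ∃ S : Set (FV n), Dominating n S ∧ S.ncard = k}

/-- The independent domination number of `J_n`. -/
noncomputable def indepDominationNumber (n : ℕ) : ℕ :=
  sInf {k | ∃ S : Set (FV n), Dominating n S ∧ IndependentSet n S ∧ S.ncard = k}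

/-- The upper domination number of `J_n`: the maximum cardinality of a minimal
dominating set. -/
noncomputable def upperDominationNumber (n : ℕ) : ℕ :=
  sSup {k | ∃ S : Set (FV n), MinimalDominating n S ∧ S.ncard = k}

/-- The 2-domination number of `J_n`. -/
noncomputable def twoDominationNumber (n : ℕ) : ℕ :=
  sInf {k | ∃ S : Set (FV n), TwoDominating n S ∧ S.ncard = k}

/-- The total domination number of `J_n`. -/
noncomputable def totalDominationNumber (n : ℕ) : ℕ :=
  sInf {k | ∃ S : Set (FV n), TotalDominating n S ∧ S.ncard = k}

/-- The connected domination number of `J_n`. -/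
noncomputable def connectedDominationNumber (n : ℕ) : ℕ :=
  sInf {k | ∃ S : Set (FV n), ConnectedDominating n S ∧ S.ncard = k}

/-- The secure domination number of `J_n`. -/
noncomputable def secureDominationNumber (n : ℕ) : ℕ :=
  sInf {k | ∃ S : Set (FV n), SecureDominating n S ∧ S.ncard = k}

/-- The weak Roman domination number of `J_n`. -/
noncomputable def weakRomanDominationNumber (n : ℕ) : ℕ :=
  sInf {k | ∃ f : FV n → ℕ, WeakRomanDominating n f ∧ ∑ v, f v = k}

/-- The weight of the copy `J^(m mod n)` in a vertex set `S`, i.e. the number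
of vertices of `S` among `a, b, c, d` of that copy. -/
noncomputable def copyWeight {n : ℕ} (S : Set (FV n)) (m : ℕ) : ℕ :=
  (S ∩ {v : FV n | (v.1 : ℕ) = m % n}).ncard

/-- The weight of the copy `J^(m mod n)` in a function `f`, i.e.
`f a + f b + f c + f d` over that copy. -/
def fCopyWeight {n : ℕ} (f : FV n → ℕ) (m : ℕ) : ℕ :=
  ∑ v ∈ Finset.univ.filter (fun v : FV n => (v.1 : ℕ) = m % n), f v

/-- Swap `c` and `d` when `e` is odd. -/
def tw (e : ℕ) (j : Fin 4) : Fin 4 := if e % 2 = 0 then j else Equiv.swap 2 3 j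

/-- The covering map from the infinite untwisted strip. -/
def cov (n : ℕ) (hn : 0 < n) (k : ℕ) (j : Fin 4) : FV n :=
  (⟨k % n, Nat.mod_lt _ hn⟩, tw (k / n) j)

theorem tw_invol (e : ℕ) (j : Fin 4) : tw e (tw e j) = j := by
  unfold tw; split_ifs <;> simp

theorem tw_zero (e : ℕ) : tw e 0 = 0 := by
  unfold tw; split_ifs <;> decide

theorem tw_one (e : ℕ) : tw e 1 = 1 := by
  unfold tw; split_ifs <;> decide

theorem tw_eq_zero (e : ℕ) (j : Fin 4) : tw e j = 0 ↔ j = 0 := by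
  unfold tw; split_ifs
  · rfl
  · revert j; decide

theorem tw_eq_one (e : ℕ) (j : Fin 4) : tw e j = 1 ↔ j = 1 := by
  unfold tw; split_ifs
  · rfl
  · revert j; decide

theorem tw_succ (e : ℕ) (j : Fin 4) : tw (e + 1) j = Equiv.swap 2 3 (tw e j) := by
  unfold tw
  rcases Nat.mod_two_eq_zero_or_one e with h | h
  · have : (e + 1) % 2 = 1 := by omega
    simp [h, this]
  · have : (e + 1) % 2 = 0 := by omega
    simp [h, this]

/-- The directed relation. -/
def fR (n : ℕ) (v w : FV n) : Prop :=
    (v.1 = w.1 ∧ v.2 = 0 ∧ w.2 ≠ 0) ∨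
    (((v.1 : ℕ) + 1) % n = (w.1 : ℕ) ∧ v.2 = 1 ∧ w.2 = 1) ∨
    ((v.1 : ℕ) + 1 = (w.1 : ℕ) ∧ v.2 = 2 ∧ w.2 = 2) ∨
    ((v.1 : ℕ) + 1 = (w.1 : ℕ) ∧ v.2 = 3 ∧ w.2 = 3) ∨
    ((v.1 : ℕ) = n - 1 ∧ (w.1 : ℕ) = 0 ∧ v.2 = 2 ∧ w.2 = 3) ∨
    ((v.1 : ℕ) = n - 1 ∧ (w.1 : ℕ) = 0 ∧ v.2 = 3 ∧ w.2 = 2)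

/-- Going around: either no wrap or a wrap. -/
theorem step_cases (n : ℕ) (hn : 0 < n) (k : ℕ) :
    ((k + 1) % n = k % n + 1 ∧ (k + 1) / n = k / n ∧ k % n + 1 < n) ∨
    ((k + 1) % n = 0 ∧ (k + 1) / n = k / n + 1 ∧ k % n = n - 1) := by
  have h1 := Nat.mod_lt k hn
  have h2 := Nat.div_add_mod k n
  by_cases h : k % n + 1 < n
  · left
    have e : k + 1 = (k % n + 1) + n * (k / n) := by omega
    refine ⟨?_, ?_, h⟩
    · rw [e, Nat.add_mul_mod_self_left, Nat.mod_eq_of_lt h]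
    · conv_lhs => rw [e]
      rw [Nat.add_mul_div_left _ _ hn, Nat.div_eq_of_lt h]; omega
  · right
    have e : k + 1 = n * (k / n + 1) := by rw [Nat.mul_add]; omega
    refine ⟨?_, ?_, by omega⟩
    · rw [e]; simp
    · conv_lhs => rw [e]
      rw [Nat.mul_div_cancel_left _ hn]

theorem fR_fwd (n : ℕ) (hn : 0 < n) (k : ℕ) (j : Fin 4) (w : FV n)
    (h : fR n (cov n hn k j) w) :
    (j = 0 ∧ ∃ j', j' ≠ 0 ∧ w = cov n hn k j') ∨ (j ≠ 0 ∧ w = cov n hn (k + 1) j) := by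
  obtain ⟨⟨m, hm⟩, l⟩ := w
  have hk := Nat.mod_lt k hn
  rcases h with ⟨h1, h2, h3⟩ | h
  · left
    simp only [cov, tw_eq_zero] at h2
    refine ⟨h2, tw (k / n) l, ?_, ?_⟩
    · rw [Ne, tw_eq_zero]; exact h3
    · simp only [cov, tw_invol]
      simp only [cov] at h1
      rw [h1]
  · right
    simp only [cov] at h
    have hj : j ≠ 0 := by
      rintro rfl
      rw [tw_zero] at h
      revert h; simp
    refine ⟨hj, ?_⟩
    simp only [cov, Prod.mk.injEq, Fin.mk.injEq]
    rcases step_cases n hn k with ⟨a, b, c⟩ | ⟨a, b, c⟩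
    · rw [a, b]
      rw [Nat.mod_eq_of_lt c] at h
      rcases h with h | h | h | h | h
      · exact ⟨h.1.symm, h.2.2.trans h.2.1.symm⟩
      · exact ⟨h.1.symm, h.2.2.trans h.2.1.symm⟩
      · exact ⟨h.1.symm, h.2.2.trans h.2.1.symm⟩
      · omega
      · omega
    · rw [a, b, tw_succ]
      have c' : k % n + 1 = n := by omega
      rw [c', Nat.mod_self] at h
      rcases h with h | h | h | h | h
      · refine ⟨h.1.symm, ?_⟩
        rw [h.2.1, h.2.2]; decide
      · omega
      · omega
      · refine ⟨h.2.1, ?_⟩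
        rw [h.2.2.1, h.2.2.2]; decide
      · refine ⟨h.2.1, ?_⟩
        rw [h.2.2.1, h.2.2.2]; decide

theorem fR_bwd (n : ℕ) (hn : 0 < n) (k : ℕ) (j : Fin 4) (w : FV n)
    (h : fR n w (cov n hn (k + 1) j)) :
    (j ≠ 0 ∧ w = cov n hn (k + 1) 0) ∨ (j ≠ 0 ∧ w = cov n hn k j) := by
  obtain ⟨⟨m, hm⟩, l⟩ := w
  have hk := Nat.mod_lt k hn
  rcases h with ⟨h1, h2, h3⟩ | h
  · left
    simp only [cov, Ne, tw_eq_zero] at h3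
    refine ⟨h3, ?_⟩
    simp only [cov] at h1 h2 ⊢
    rw [h1, h2, tw_zero]
  · right
    simp only [cov] at h
    have hj : j ≠ 0 := by
      rintro rfl
      rw [tw_zero] at h
      revert h; simp
    refine ⟨hj, ?_⟩
    simp only [cov, Prod.mk.injEq, Fin.mk.injEq]
    rcases step_cases n hn k with ⟨a, b, c⟩ | ⟨a, b, c⟩
    · rw [a, b] at h
      rcases h with h | h | h | h | h
      · refine ⟨?_, h.2.1.trans h.2.2.symm⟩
        rcases Nat.lt_or_ge (m + 1) n with q | q
        · rw [Nat.mod_eq_of_lt q] at h; omega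
        · have q' : m + 1 = n := by omega
          rw [q', Nat.mod_self] at h; omega
      · exact ⟨by omega, h.2.1.trans h.2.2.symm⟩
      · exact ⟨by omega, h.2.1.trans h.2.2.symm⟩
      · omega
      · omega
    · rw [a, b, tw_succ] at h
      have key : tw (k / n) j = Equiv.swap 2 3 (Equiv.swap 2 3 (tw (k / n) j)) := by simp
      rw [key, c]
      rcases h with h | h | h | h | h
      · refine ⟨?_, ?_⟩
        · rcases Nat.lt_or_ge (m + 1) n with q | q
          · rw [Nat.mod_eq_of_lt q] at h; omega
          · omega
        · rw [h.2.1, h.2.2]; decide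
      · omega
      · omega
      · refine ⟨h.1, ?_⟩
        rw [h.2.2.1, h.2.2.2]; decide
      · refine ⟨h.1, ?_⟩
        rw [h.2.2.1, h.2.2.2]; decide

/-- Every neighbour of a covered vertex is covered by a neighbour in the strip. -/
theorem cov_adj (n : ℕ) (hn : 0 < n) (k : ℕ) (j : Fin 4) (w : FV n)
    (h : (flowerSnark n).Adj (cov n hn (k + 1) j) w) :
    (j = 0 ∧ ∃ j', j' ≠ 0 ∧ w = cov n hn (k + 1) j') ∨
    (j ≠ 0 ∧ (w = cov n hn (k + 1) 0 ∨ w = cov n hn k j ∨ w = cov n hn (k + 2) j)) := by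
  have h' : fR n (cov n hn (k + 1) j) w ∨ fR n w (cov n hn (k + 1) j) := by
    unfold flowerSnark at h
    rw [SimpleGraph.fromRel_adj] at h
    exact h.2
  rcases h' with h' | h'
  · rcases fR_fwd n hn (k + 1) j w h' with h | h
    · exact Or.inl h
    · exact Or.inr ⟨h.1, Or.inr (Or.inr h.2)⟩
  · rcases fR_bwd n hn k j w h' with h | h
    · exact Or.inr ⟨h.1, Or.inl h.2⟩
    · exact Or.inr ⟨h.1, Or.inr (Or.inl h.2)⟩

open Classical in
theorem copyWeight_cov (n : ℕ) (hn : 0 < n) (S : Set (FV n)) (k : ℕ) :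
    copyWeight S k = (Finset.univ.filter (fun j => cov n hn k j ∈ S)).card := by
  unfold copyWeight
  have : (S ∩ {v : FV n | (v.1 : ℕ) = k % n}) =
      cov n hn k '' (↑(Finset.univ.filter (fun j => cov n hn k j ∈ S)) : Set (Fin 4)) := by
    ext ⟨⟨m, hm⟩, l⟩
    simp only [Set.mem_inter_iff, Set.mem_ofPred_eq, Set.mem_image, Finset.coe_filter,
      Finset.mem_univ, true_and]
    constructor
    · rintro ⟨h1, rfl⟩
      have e : cov n hn k (tw (k / n) l) = (⟨k % n, hm⟩, l) := by
        simp [cov, tw_invol]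
      exact ⟨tw (k / n) l, by rw [e]; exact h1, e⟩
    · rintro ⟨j, hj, e⟩
      rw [e] at hj
      refine ⟨hj, ?_⟩
      simp only [cov, Prod.mk.injEq, Fin.mk.injEq] at e
      exact e.1.symm
  rw [this, Set.ncard_image_of_injective, Set.ncard_coe_finset]
  intro x y hxy
  simp only [cov, Prod.mk.injEq, true_and] at hxy
  rw [← tw_invol (k / n) x, hxy, tw_invol]

theorem wt_one (n : ℕ) (hn : 0 < n) (S : Set (FV n)) (k : ℕ) (h : copyWeight S k = 1) :
    ∃ j, ∀ j', cov n hn k j' ∈ S ↔ j' = j := by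
  classical
  rw [copyWeight_cov n hn, Finset.card_eq_one] at h
  obtain ⟨j, hj⟩ := h
  refine ⟨j, fun j' => ?_⟩
  have := Finset.ext_iff.1 hj j'
  simpa using this

theorem wt_two (n : ℕ) (hn : 0 < n) (S : Set (FV n)) (k : ℕ) (h : copyWeight S k = 2) :
    ∃ p q, p ≠ q ∧ ∀ j', cov n hn k j' ∈ S ↔ (j' = p ∨ j' = q) := by
  classical
  rw [copyWeight_cov n hn, Finset.card_eq_two] at h
  obtain ⟨p, q, hpq, hj⟩ := h
  refine ⟨p, q, hpq, fun j' => ?_⟩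
  have := Finset.ext_iff.1 hj j'
  simpa using this

theorem wt_three (n : ℕ) (hn : 0 < n) (S : Set (FV n)) (k : ℕ) (h : copyWeight S k = 3) :
    ∃ j, ∀ j', cov n hn k j' ∈ S ↔ j' ≠ j := by
  classical
  rw [copyWeight_cov n hn] at h
  have h2 : (Finset.univ.filter (fun j => cov n hn k j ∈ S))ᶜ.card = 1 := by
    rw [Finset.card_compl, h]; rfl
  rw [Finset.card_eq_one] at h2
  obtain ⟨j, hj⟩ := h2
  refine ⟨j, fun j' => ?_⟩
  have := Finset.ext_iff.1 hj j'
  simp only [Finset.mem_compl, Finset.mem_filter, Finset.mem_univ, true_and,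
    Finset.mem_singleton] at this
  tauto

/-- Connectedness: a nonempty subset of `S` closed under adjacency in `S` is all of `S`. -/
theorem conn_closed {V : Type*} (G : SimpleGraph V) (S T : Set V) (hc : (G.induce S).Connected)
    (hcl : ∀ v ∈ T, ∀ w ∈ S, G.Adj v w → w ∈ T) (v w : V) (hv : v ∈ S) (hvT : v ∈ T)
    (hw : w ∈ S) : w ∈ T := by
  obtain ⟨p⟩ := hc.preconnected ⟨v, hv⟩ ⟨w, hw⟩
  have : ∀ (x y : S), (G.induce S).Walk x y → (x : V) ∈ T → (y : V) ∈ T := by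
    intro x y p
    induction p with
    | nil => exact id
    | cons h _ ih => exact fun hx => ih (hcl _ hx _ (Subtype.property _) h)
  exact this _ _ p hvT

/-- Dominating, on the strip. -/
theorem dom_strip (n : ℕ) (hn : 0 < n) (S : Set (FV n)) (hS : Dominating n S) (k : ℕ) (j : Fin 4)
    (hj : j ≠ 0) : cov n hn (k + 1) j ∈ S ∨ cov n hn (k + 1) 0 ∈ S ∨ cov n hn k j ∈ S ∨
      cov n hn (k + 2) j ∈ S := by
  by_cases h : cov n hn (k + 1) j ∈ S
  · exact Or.inl h
  · obtain ⟨w, hw, ha⟩ := hS _ h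
    rcases cov_adj n hn k j w ha with ⟨h0, _⟩ | ⟨_, rfl | rfl | rfl⟩
    · exact absurd h0 hj
    · tauto
    · tauto
    · tauto

theorem mod_ne_succ (n : ℕ) (hn : 3 ≤ n) (k : ℕ) : (k + 1) % n ≠ k % n := by
  rcases step_cases n (by omega) k with ⟨a, b, c⟩ | ⟨a, b, c⟩ <;> omega

/-- No isolated vertices, when the next copy is nonempty. -/
theorem iso_strip (n : ℕ) (hn : 3 ≤ n) (S : Set (FV n))
    (hc : ((flowerSnark n).induce S).Connected) (k : ℕ) (j l : Fin 4)
    (hj : cov n (by omega) (k + 1) j ∈ S) (hl : cov n (by omega) (k + 2) l ∈ S) :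
    (j = 0 ∧ ∃ j', j' ≠ 0 ∧ cov n (by omega) (k + 1) j' ∈ S) ∨
    (j ≠ 0 ∧ (cov n (by omega) (k + 1) 0 ∈ S ∨ cov n (by omega) k j ∈ S ∨
      cov n (by omega) (k + 2) j ∈ S)) := by
  by_contra hcon
  have := conn_closed (flowerSnark n) S {cov n (by omega) (k + 1) j} hc ?_ _ _ hj rfl hl
  · have h2 := congrArg (fun v : FV n => (v.1 : ℕ)) (Set.mem_singleton_iff.1 this)
    exact mod_ne_succ n hn (k + 1) h2
  · rintro v hv w hw ha
    rw [Set.mem_singleton_iff] at hv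
    subst hv
    exfalso
    apply hcon
    rcases cov_adj n _ k j w ha with ⟨h0, j', hj', rfl⟩ | ⟨h0, rfl | rfl | rfl⟩
    · exact Or.inl ⟨h0, j', hj', hw⟩
    · exact Or.inr ⟨h0, Or.inl hw⟩
    · exact Or.inr ⟨h0, Or.inr (Or.inl hw)⟩
    · exact Or.inr ⟨h0, Or.inr (Or.inr hw)⟩

/-- Pure finite lemma for the pattern 111. -/
theorem fin111 (x y z : Fin 4)
    (hd : ∀ j : Fin 4, j ≠ 0 → j = y ∨ 0 = y ∨ j = x ∨ j = z)
    (hi : (y = 0 ∧ ∃ j' : Fin 4, j' ≠ 0 ∧ j' = y) ∨ (y ≠ 0 ∧ (0 = y ∨ y = x ∨ y = z))) :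
    False := by
  revert x y z; decide

/-- In a pattern 131 the middle copy contains `a`. -/
theorem fin131 (x m z : Fin 4)
    (hi : ∀ j : Fin 4, j ≠ m → (j = 0 ∧ ∃ j' : Fin 4, j' ≠ 0 ∧ j' ≠ m) ∨
      (j ≠ 0 ∧ (0 ≠ m ∨ j = x ∨ j = z))) : m ≠ 0 := by
  revert x m z; decide

/-- In the pattern 121 the middle copy contains `a`. -/
theorem fin121 (x p q z : Fin 4) (hpq : p ≠ q)
    (hd : ∀ j : Fin 4, j ≠ 0 → (j = p ∨ j = q) ∨ (0 = p ∨ 0 = q) ∨ j = x ∨ j = z)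
    (hi : ∀ j : Fin 4, (j = p ∨ j = q) →
      (j = 0 ∧ ∃ j' : Fin 4, j' ≠ 0 ∧ (j' = p ∨ j' = q)) ∨
      (j ≠ 0 ∧ ((0 = p ∨ 0 = q) ∨ j = x ∨ j = z))) : 0 = p ∨ 0 = q := by
  by_contra hc
  have hi1 := hi p (Or.inl rfl)
  have hi2 := hi q (Or.inr rfl)
  have d1 := hd 1 (by decide)
  have d2 := hd 2 (by decide)
  have d3 := hd 3 (by decide)
  clear hd hi
  grind

/-- Pattern 3 1 {a,z}: `z` cannot be in all three. -/
theorem fin31 (m x z : Fin 4) (hz : z ≠ 0) (hm : m ≠ 0) (hx : x = z)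
    (hd : ∀ j : Fin 4, j ≠ 0 → j = x ∨ 0 = x ∨ j ≠ m ∨ (j = 0 ∨ j = z)) : z = m := by
  have := hd m hm
  subst hx
  grind

/-- If `n ≥ 3` and `S` is a connected dominating set of the flower snark `J_n`,
then `S` contains neither the pattern 111 nor the pattern 1312131 of weights on
consecutive copies (indices mod `n`). -/
theorem flowerSnark_connectedDominating_patterns (n : ℕ) (hn : 3 ≤ n)
    (S : Set (FV n)) (hS : ConnectedDominating n S) :
    (¬ ∃ i : Fin n, copyWeight S (i : ℕ) = 1 ∧ copyWeight S ((i : ℕ) + 1) = 1 ∧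
        copyWeight S ((i : ℕ) + 2) = 1) ∧
    (¬ ∃ i : Fin n, copyWeight S (i : ℕ) = 1 ∧ copyWeight S ((i : ℕ) + 1) = 3 ∧
        copyWeight S ((i : ℕ) + 2) = 1 ∧ copyWeight S ((i : ℕ) + 3) = 2 ∧
        copyWeight S ((i : ℕ) + 4) = 1 ∧ copyWeight S ((i : ℕ) + 5) = 3 ∧
        copyWeight S ((i : ℕ) + 6) = 1) := by
  have h0 : 0 < n := by omega
  obtain ⟨hD, hC⟩ := hS
  have per : ∀ m, copyWeight S m = copyWeight S (m + n) := by
    intro m; unfold copyWeight; rw [Nat.add_mod_right]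
  constructor
  · rintro ⟨⟨i, hi⟩, w0, w1, w2⟩
    simp only at w0 w1 w2
    obtain ⟨x, hx⟩ := wt_one n h0 S _ w0
    obtain ⟨y, hy⟩ := wt_one n h0 S _ w1
    obtain ⟨z, hz⟩ := wt_one n h0 S _ w2
    apply fin111 x y z
    · intro j hj
      have := dom_strip n h0 S hD i j hj
      rwa [hx, hy, hy, hz] at this
    · have := iso_strip n hn S hC i y z ((hy y).2 rfl) ((hz z).2 rfl)
      simpa only [hx, hy, hz] using this
  · rintro ⟨⟨i, hi⟩, w0, w1, w2, w3, w4, w5, w6⟩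
    simp only at w0 w1 w2 w3 w4 w5 w6
    have hn3 : n ≠ 3 := by
      rintro rfl
      have := per i
      omega
    obtain ⟨x0, h0'⟩ := wt_one n h0 S _ w0
    obtain ⟨m1, h1⟩ := wt_three n h0 S _ w1
    obtain ⟨x2, h2⟩ := wt_one n h0 S _ w2
    obtain ⟨p, q, hpq, h3⟩ := wt_two n h0 S _ w3
    obtain ⟨x4, h4⟩ := wt_one n h0 S _ w4
    obtain ⟨m5, h5⟩ := wt_three n h0 S _ w5
    obtain ⟨x6, h6⟩ := wt_one n h0 S _ w6
    have hm1 : m1 ≠ 0 := by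
      apply fin131 x0 m1 x2
      intro j hj
      have := iso_strip n hn S hC i j x2 ((h1 j).2 hj) ((h2 _).2 rfl)
      simpa only [h0', h1, h2] using this
    have hm5 : m5 ≠ 0 := by
      apply fin131 x4 m5 x6
      intro j hj
      have := iso_strip n hn S hC (i + 4) j x6 ((h5 j).2 hj) ((h6 _).2 rfl)
      simpa only [h4, h5, h6] using this
    have hpq0 : 0 = p ∨ 0 = q := by
      apply fin121 x2 p q x4 hpq
      · intro j hj
        have := dom_strip n h0 S hD (i + 2) j hj
        simpa only [h2, h3, h4] using this
      · intro j hj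
        have := iso_strip n hn S hC (i + 2) j x4 ((h3 j).2 hj) ((h4 _).2 rfl)
        simpa only [h2, h3, h4] using this
    obtain ⟨z, hz, h3z⟩ : ∃ z : Fin 4, z ≠ 0 ∧
        ∀ j, cov n h0 (i + 3) j ∈ S ↔ (j = 0 ∨ j = z) := by
      rcases hpq0 with rfl | rfl
      · exact ⟨q, hpq.symm, h3⟩
      · exact ⟨p, hpq, fun j => (h3 j).trans or_comm⟩
    have hx2 : x2 ≠ 0 := by
      obtain ⟨l, hl⟩ : ∃ l, cov n h0 (i + 1 + 2) l ∈ S := ⟨0, (h3z 0).2 (Or.inl rfl)⟩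
      rcases iso_strip n hn S hC (i + 1) x2 l ((h2 _).2 rfl) hl with ⟨e, j', a, b⟩ | h
      · rw [h2] at b; rw [← b]; exact a
      · exact h.1
    have hx4 : x4 ≠ 0 := by
      obtain ⟨l, hl⟩ : ∃ l, cov n h0 (i + 3 + 2) l ∈ S := ⟨0, (h5 0).2 hm5.symm⟩
      rcases iso_strip n hn S hC (i + 3) x4 l ((h4 _).2 rfl) hl with ⟨e, j', a, b⟩ | h
      · rw [h4] at b; rw [← b]; exact a
      · exact h.1
    have hL : x2 = z → z = m1 := by
      intro hx
      apply fin31 m1 x2 z hz hm1 hx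
      intro j hj
      have := dom_strip n h0 S hD (i + 1) j hj
      simpa only [h1, h2, h3z] using this
    have hR : x4 = z → z = m5 := by
      intro hx
      apply fin31 m5 x4 z hz hm5 hx
      intro j hj
      have := dom_strip n h0 S hD (i + 3) j hj
      have h := this
      simp only [h3z, h4, h5] at h
      tauto
    -- the closed component
    have key := conn_closed (flowerSnark n) S
      {v | v = cov n h0 (i + 3) 0 ∨ v = cov n h0 (i + 3) z ∨
        (v = cov n h0 (i + 2) z ∧ x2 = z) ∨ (v = cov n h0 (i + 4) z ∧ x4 = z)} hC ?_
      (cov n h0 (i + 3) 0) (cov n h0 (i + 1) 0) ((h3z 0).2 (Or.inl rfl)) (Or.inl rfl)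
      ((h1 0).2 hm1.symm)
    · have t1 := mod_ne_succ n hn (i + 1)
      have hne : ∀ a b : Fin 4, ∀ d, 0 < d → d < 4 → cov n h0 (i + 1) a ≠ cov n h0 (i + 1 + d) b := by
        intro a b d hd hd4 e
        have e2 : (i + 1) % n = (i + 1 + d) % n := congrArg (fun v : FV n => (v.1 : ℕ)) e
        have e3 : n ∣ d := by
          have := (Nat.modEq_iff_dvd' (by omega : i + 1 ≤ i + 1 + d)).1 e2
          simpa using this
        have := Nat.le_of_dvd hd e3
        omega
      rcases key with e | e | ⟨e, _⟩ | ⟨e, _⟩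
      · exact hne 0 0 2 (by omega) (by omega) e
      · exact hne 0 z 2 (by omega) (by omega) e
      · exact hne 0 z 1 (by omega) (by omega) e
      · exact hne 0 z 3 (by omega) (by omega) e
    · rintro v (rfl | rfl | ⟨rfl, ex⟩ | ⟨rfl, ex⟩) w hw ha
      · rcases cov_adj n h0 (i + 2) _ w ha with ⟨_, j', hj', rfl⟩ | ⟨h, _⟩
        · rcases (h3z j').1 hw with rfl | rfl
          · exact absurd rfl hj'
          · exact Or.inr (Or.inl rfl)
        · exact absurd rfl h
      · rcases cov_adj n h0 (i + 2) _ w ha with ⟨h, _⟩ | ⟨_, rfl | rfl | rfl⟩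
        · exact absurd h hz
        · exact Or.inl rfl
        · exact Or.inr (Or.inr (Or.inl ⟨rfl, ((h2 _).1 hw).symm⟩))
        · exact Or.inr (Or.inr (Or.inr ⟨rfl, ((h4 _).1 hw).symm⟩))
      · rcases cov_adj n h0 (i + 1) _ w ha with ⟨h, _⟩ | ⟨_, rfl | rfl | rfl⟩
        · exact absurd h hz
        · exact absurd ((h2 _).1 hw).symm hx2
        · exact absurd (hL ex) ((h1 _).1 hw)
        · exact Or.inr (Or.inl rfl)
      · rcases cov_adj n h0 (i + 3) _ w ha with ⟨h, _⟩ | ⟨_, rfl | rfl | rfl⟩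
        · exact absurd h hz
        · exact absurd ((h4 _).1 hw).symm hx4
        · exact Or.inr (Or.inl rfl)
        · exact absurd (hR ex) ((h5 _).1 hw)
end

section
/- Let n ≥ 3 and let f be a weak Roman dominating function on the flower snark J_n. Then there is no index i such that the copies J^i, J^{i+1}, J^{i+2} have weights 1, 1, 1 in f; there is no index i such that the copies J^i, J^{i+1}, J^{i+2}, J^{i+3} have weights 1, 1, 2, 1 (or, read in reverse, 1, 2, 1, 1) in f; and there is no index i such that the copies J^i, …, J^{i+6} have weights 1, 2, 1, 2, 1, 2, 1 in f (all indices mod n). -/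
/-- Neighbours in the infinite cover. -/
def cnb (v : ℕ × ℕ) : List (ℕ × ℕ) :=
  match v with
  | (p, 0) => [(p, 1), (p, 2), (p, 3)]
  | (p, k + 1) => [(p, 0), (p - 1, k + 1), (p + 1, k + 1)]

theorem cnb_def (v : ℕ × ℕ) : cnb v = if v.2 = 0 then [(v.1, 1), (v.1, 2), (v.1, 3)]
    else [(v.1, 0), (v.1 - 1, v.2), (v.1 + 1, v.2)] := by
  obtain ⟨p, _ | k⟩ := v <;> simp [cnb]

/-- Fast equality test on pairs. -/
def eqv (u v : ℕ × ℕ) : Bool := Nat.beq u.1 v.1 && Nat.beq u.2 v.2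

theorem eqv_iff (u v : ℕ × ℕ) : eqv u v = true ↔ u = v := by
  simp [eqv, Prod.ext_iff]

theorem eqv_not_iff (u v : ℕ × ℕ) : (!eqv u v) = true ↔ u ≠ v := by
  rw [ne_eq, ← eqv_iff]; simp

/-- The local condition at `v`, monotone in `F`. -/
def okAt (ex : Bool) (F : ℕ × ℕ → ℕ) (v : ℕ × ℕ) : Bool :=
  Nat.ble 1 (F v) || (cnb v).any fun w =>
    Nat.ble 2 (F w) || (Nat.ble 1 (F w) && (cnb w).all fun u =>
      eqv u v || Nat.ble 1 (F u) ||
        (ex && (Nat.beq v.2 1 && (Nat.beq w.2 1 && Nat.beq u.2 1))) ||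
        (cnb u).any fun x => !eqv x w && Nat.ble 1 (F x))

theorem okAt_mono (ex : Bool) (F F' : ℕ × ℕ → ℕ) (h : ∀ v, F v ≤ F' v) (v : ℕ × ℕ)
    (hv : okAt ex F v = true) : okAt ex F' v = true := by
  simp only [okAt, eqv_iff, eqv_not_iff, Nat.ble_eq, Nat.beq_eq, Bool.or_eq_true, decide_eq_true_eq, List.any_eq_true, Bool.and_eq_true,
    List.all_eq_true] at hv ⊢
  rcases hv with hv | ⟨w, hw, hv⟩
  · exact Or.inl (hv.trans (h v))
  · refine Or.inr ⟨w, hw, ?_⟩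
    rcases hv with hv | ⟨h1, hv⟩
    · exact Or.inl (hv.trans (h w))
    · refine Or.inr ⟨h1.trans (h w), fun u hu => ?_⟩
      rcases hv u hu with ((h2 | h2) | h2) | ⟨x, hx, h2, h3⟩
      · exact Or.inl (Or.inl (Or.inl h2))
      · exact Or.inl (Or.inl (Or.inr (h2.trans (h u))))
      · exact Or.inl (Or.inr h2)
      · exact Or.inr ⟨x, hx, h2, h3.trans (h x)⟩

/-- Possible rows of a given weight. -/
def rowOpts : ℕ → List (List ℕ)
  | 1 => [[1,0,0,0],[0,1,0,0],[0,0,1,0],[0,0,0,1]]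
  | 2 => [[2,0,0,0],[0,2,0,0],[0,0,2,0],[0,0,0,2],[1,1,0,0],[1,0,1,0],[1,0,0,1],
      [0,1,1,0],[0,1,0,1],[0,0,1,1]]
  | _ => []

/-- Optimistic extension of a finite list of rows, starting at row 3. -/
def optF (c : List (List ℕ)) (v : ℕ × ℕ) : ℕ :=
  match Nat.ble 3 v.1 with
  | false => 2
  | true => (c.getD (v.1 - 3) []).getD v.2 2

/-- Consistency check of a prefix. -/
def consist (ex : Bool) (c : List (List ℕ)) : Bool :=
  [1, 0, 2, 3].all fun j => [0, 1, 2, 3].all fun k =>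
    okAt ex (optF c) (c.length - 1 - j + 3, k)

/-- Backtracking refutation. -/
def refute (ex : Bool) : List ℕ → List (List ℕ) → Bool
  | [], c => !consist ex c
  | w :: pat, c => !consist ex c || (rowOpts w).all fun o => refute ex pat (c ++ [o])

/-- A row of `F`. -/
def rowOf (F : ℕ × ℕ → ℕ) (p : ℕ) : List ℕ := [F (p, 0), F (p, 1), F (p, 2), F (p, 3)]

theorem rowOf_mem (F : ℕ × ℕ → ℕ) (p w : ℕ) (hw : w = 1 ∨ w = 2)
    (h : F (p, 0) + F (p, 1) + F (p, 2) + F (p, 3) = w) : rowOf F p ∈ rowOpts w := by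
  unfold rowOf
  generalize F (p, 0) = a at *
  generalize F (p, 1) = b at *
  generalize F (p, 2) = c at *
  generalize F (p, 3) = d at *
  rcases hw with rfl | rfl
  · simp only [rowOpts, List.mem_cons, List.cons.injEq, List.not_mem_nil, and_true, or_false]
    omega
  · have ha : a ≤ 2 := by omega
    have hb : b ≤ 2 := by omega
    have hc : c ≤ 2 := by omega
    have hd : d = 2 - a - b - c := by omega
    interval_cases a <;> interval_cases b <;> interval_cases c <;>
      first
      | omega
      | (subst hd; decide)

theorem consist_of (ex : Bool) (F : ℕ × ℕ → ℕ) (hF : ∀ v, F v ≤ 2)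
    (hok : ∀ p k, 3 ≤ p → k < 4 → okAt ex F (p, k) = true) (m : ℕ) :
    consist ex ((List.range m).map fun j => rowOf F (j + 3)) = true := by
  simp only [consist, List.all_eq_true]
  intro j _ k hk
  refine okAt_mono ex F _ ?_ _ (hok _ k (by omega) (by simp at hk; omega))
  rintro ⟨p, k⟩
  unfold optF
  split
  · exact hF _
  · rename_i h
    simp only [Nat.ble_eq] at h ⊢
    by_cases hm : p - 3 < m
    · have : p - 3 + 3 = p := by omega
      rcases k with _ | _ | _ | _ | k <;>
        simp [List.getD_eq_getElem?_getD, hm, rowOf, this, hF]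
    · simp [List.getD_eq_getElem?_getD, hm, hF]

theorem refute_sound (ex : Bool) (F : ℕ × ℕ → ℕ) (hF : ∀ v, F v ≤ 2)
    (hok : ∀ p k, 3 ≤ p → k < 4 → okAt ex F (p, k) = true) (pat : List ℕ) :
    ∀ m : ℕ, (∀ j (hj : j < pat.length), (pat[j] = 1 ∨ pat[j] = 2) ∧
      F (m + j + 3, 0) + F (m + j + 3, 1) + F (m + j + 3, 2) + F (m + j + 3, 3) = pat[j]) →
    refute ex pat ((List.range m).map fun j => rowOf F (j + 3)) = true → False := by
  induction pat with
  | nil =>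
    intro m _ h
    simp [refute, consist_of ex F hF hok m] at h
  | cons w pat ih =>
    intro m hp h
    simp only [refute, consist_of ex F hF hok m, Bool.not_true, Bool.false_or,
      List.all_eq_true] at h
    have h0 := hp 0 (by simp)
    simp only [List.getElem_cons_zero, Nat.add_zero] at h0
    have h1 := h _ (rowOf_mem F (m + 3) w h0.1 h0.2)
    refine ih (m + 1) ?_ ?_
    · intro j hj
      have := hp (j + 1) (by simpa using hj)
      simpa [Nat.add_assoc, Nat.add_comm, Nat.add_left_comm] using this
    · simpa [List.range_succ] using h1

theorem refute1 : refute true [1,1,1] [] = true := by decide +kernel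
theorem refute2 : refute true [1,1,2,1] [] = true := by decide +kernel
theorem refute3 : refute true [1,2,1,1] [] = true := by decide +kernel
theorem refute4 : refute false [1,2,1,2,1,2,1] [] = true := by decide +kernel

theorem okAt_ex (F : ℕ × ℕ → ℕ) (v : ℕ × ℕ) (ex : Bool)
    (hv : okAt ex F v = true) : okAt true F v = true := by
  cases ex
  · simp only [okAt, eqv_iff, eqv_not_iff, Nat.ble_eq, Nat.beq_eq, Bool.or_eq_true, decide_eq_true_eq, List.any_eq_true, Bool.and_eq_true,
      List.all_eq_true] at hv ⊢
    rcases hv with hv | ⟨w, hw, hv⟩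
    · exact Or.inl hv
    · refine Or.inr ⟨w, hw, ?_⟩
      rcases hv with hv | ⟨h1, hv⟩
      · exact Or.inl hv
      · refine Or.inr ⟨h1, fun u hu => ?_⟩
        rcases hv u hu with ((h2 | h2) | h2) | h2
        · exact Or.inl (Or.inl (Or.inl h2))
        · exact Or.inl (Or.inl (Or.inr h2))
        · exact absurd h2.1 (by simp)
        · exact Or.inr h2
  · exact hv

/-- Label of the vertex, swapping `c,d` on odd sheets. -/
def sw (q k : ℕ) : Fin 4 :=
  if k = 0 then 0 else if k = 1 then 1 else if (k + q) % 2 = 0 then 2 else 3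

/-- Projection from the cover, shifted by `s`. -/
def prj (n : ℕ) (hn : 3 ≤ n) (s : ℕ) (v : ℕ × ℕ) : FV n :=
  (⟨(v.1 + s) % n, Nat.mod_lt _ (by omega)⟩, sw ((v.1 + s) / n) v.2)

theorem step (n : ℕ) (hn : 3 ≤ n) (P : ℕ) :
    (P % n + 1 < n ∧ (P + 1) % n = P % n + 1 ∧ (P + 1) / n = P / n) ∨
    (P % n = n - 1 ∧ (P + 1) % n = 0 ∧ (P + 1) / n = P / n + 1) := by
  have h0 : P % n < n := Nat.mod_lt _ (by omega)
  have h1 := Nat.div_add_mod P n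
  by_cases h : P % n + 1 < n
  · left
    have e : P + 1 = (P % n + 1) + n * (P / n) := by omega
    refine ⟨h, ?_, ?_⟩
    · rw [e, Nat.add_mul_mod_self_left, Nat.mod_eq_of_lt h]
    · rw [e, Nat.add_mul_div_left _ _ (by omega), Nat.div_eq_of_lt h]; simp
  · right
    have e : P + 1 = 0 + n * (P / n + 1) := by rw [Nat.mul_add]; omega
    refine ⟨by omega, ?_, ?_⟩
    · rw [e, Nat.add_mul_mod_self_left]; simp
    · rw [e, Nat.add_mul_div_left _ _ (by omega)]; simp

theorem sw_zero_iff (q k : ℕ) : sw q k = 0 ↔ k = 0 := by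
  unfold sw; split_ifs <;> simp_all

theorem sw_one_iff (q k : ℕ) : sw q k = 1 ↔ k = 1 := by
  unfold sw; split_ifs <;> simp_all

theorem sw_two_iff (q k : ℕ) : sw q k = 2 ↔ 2 ≤ k ∧ (k + q) % 2 = 0 := by
  unfold sw; split_ifs <;> simp_all <;> omega

theorem sw_three_iff (q k : ℕ) : sw q k = 3 ↔ 2 ≤ k ∧ (k + q) % 2 = 1 := by
  unfold sw; split_ifs <;> simp_all <;> omega

theorem sw_eq_iff (q k q' k' : ℕ) (hk : k < 4) (hk' : k' < 4) : sw q k = sw q' k' ↔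
    (k = 0 ∧ k' = 0) ∨ (k = 1 ∧ k' = 1) ∨ (2 ≤ k ∧ 2 ≤ k' ∧ (k + q) % 2 = (k' + q') % 2) := by
  unfold sw; split_ifs <;> simp <;> omega

theorem prj_eq_iff (n : ℕ) (hn : 3 ≤ n) (s : ℕ) (v w : ℕ × ℕ) (hv : v.2 < 4) (hw : w.2 < 4) :
    prj n hn s v = prj n hn s w ↔ (v.1 + s) % n = (w.1 + s) % n ∧
    ((v.2 = 0 ∧ w.2 = 0) ∨ (v.2 = 1 ∧ w.2 = 1) ∨
      (2 ≤ v.2 ∧ 2 ≤ w.2 ∧ (v.2 + (v.1 + s) / n) % 2 = (w.2 + (w.1 + s) / n) % 2)) := by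
  rw [← sw_eq_iff _ _ _ _ hv hw]
  simp [prj, Prod.ext_iff]

theorem cnb_lt (v w : ℕ × ℕ) (hv : v.2 < 4) (hw : w ∈ cnb v) : w.2 < 4 := by
  rw [cnb_def] at hw
  split_ifs at hw <;> simp at hw <;> rcases hw with rfl | rfl | rfl <;> simp_all

theorem cnb_iff (v w : ℕ × ℕ) (hv : 1 ≤ v.1) : w ∈ cnb v ↔
    (v.2 = 0 ∧ w.1 = v.1 ∧ (w.2 = 1 ∨ w.2 = 2 ∨ w.2 = 3)) ∨
    (v.2 ≠ 0 ∧ ((w.1 = v.1 ∧ w.2 = 0) ∨ (w.1 + 1 = v.1 ∧ w.2 = v.2) ∨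
      (w.1 = v.1 + 1 ∧ w.2 = v.2))) := by
  obtain ⟨p, k⟩ := v
  obtain ⟨p', k'⟩ := w
  rw [cnb_def]
  split_ifs with h <;> simp at h hv ⊢ <;> omega

theorem sw_val (q k : ℕ) : ((sw q k : Fin 4) : ℕ) = if k ≤ 1 then k else 2 + (k + q) % 2 := by
  unfold sw; split_ifs <;> simp <;> omega

theorem succ_mod (n r : ℕ) (hr : r < n) :
    (r + 1 < n ∧ (r + 1) % n = r + 1) ∨ (r + 1 = n ∧ (r + 1) % n = 0) := by
  by_cases h : r + 1 < n
  · exact Or.inl ⟨h, Nat.mod_eq_of_lt h⟩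
  · have : r + 1 = n := by omega
    exact Or.inr ⟨this, by rw [this, Nat.mod_self]⟩

theorem adj_core (n r t r0 r1 r2 q0 q1 q2 k T m1 m2 : ℕ) (hn : 3 ≤ n) (hr : r < n) (ht : t < 4)
    (hk : k < 4)
    (s1 : (r0 + 1 < n ∧ r1 = r0 + 1 ∧ q1 = q0) ∨ (r0 = n - 1 ∧ r1 = 0 ∧ q1 = q0 + 1))
    (s2 : (r1 + 1 < n ∧ r2 = r1 + 1 ∧ q2 = q1) ∨ (r1 = n - 1 ∧ r2 = 0 ∧ q2 = q1 + 1))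
    (hm1 : (r + 1 < n ∧ m1 = r + 1) ∨ (r + 1 = n ∧ m1 = 0))
    (hm2 : (r1 + 1 < n ∧ m2 = r1 + 1) ∨ (r1 + 1 = n ∧ m2 = 0))
    (hT : (k ≤ 1 ∧ T = k) ∨ (2 ≤ k ∧ T = 2 + (k + q1) % 2))
    (h : (r1 = r ∧ T = 0 ∧ ¬ t = 0 ∨ m2 = r ∧ T = 1 ∧ t = 1 ∨ r1 + 1 = r ∧ T = 2 ∧ t = 2 ∨
      r1 + 1 = r ∧ T = 3 ∧ t = 3 ∨ r1 = n - 1 ∧ r = 0 ∧ T = 2 ∧ t = 3 ∨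
      r1 = n - 1 ∧ r = 0 ∧ T = 3 ∧ t = 2) ∨
      r = r1 ∧ t = 0 ∧ ¬ T = 0 ∨ m1 = r1 ∧ t = 1 ∧ T = 1 ∨ r + 1 = r1 ∧ t = 2 ∧ T = 2 ∨
      r + 1 = r1 ∧ t = 3 ∧ T = 3 ∨ r = n - 1 ∧ r1 = 0 ∧ t = 2 ∧ T = 3 ∨
      r = n - 1 ∧ r1 = 0 ∧ t = 3 ∧ T = 2) :
    (k = 0 ∧ r = r1 ∧ t ≠ 0) ∨ (k ≠ 0 ∧ ((r = r1 ∧ t = 0) ∨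
      (r = r0 ∧ ((k ≤ 1 ∧ t = k) ∨ (2 ≤ k ∧ t = 2 + (k + q0) % 2))) ∨
      (r = r2 ∧ ((k ≤ 1 ∧ t = k) ∨ (2 ≤ k ∧ t = 2 + (k + q2) % 2))))) := by
  rcases h with (h | h) | h | h
  · left; clear s1 s2 hm1 hm2; omega
  · right
    have hk0 : k ≠ 0 := by clear s1 s2 hm1 hm2; omega
    refine ⟨hk0, Or.inr (Or.inr ?_)⟩
    clear s1 hm1
    rcases h with h | h | h | h | h <;> omega
  · right
    have hk0 : k ≠ 0 := by clear s1 s2 hm1 hm2; omega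
    exact ⟨hk0, Or.inl ⟨h.1, h.2.1⟩⟩
  · right
    have hk0 : k ≠ 0 := by clear s1 s2 hm1 hm2; omega
    refine ⟨hk0, Or.inr (Or.inl ?_)⟩
    clear s2 hm2
    rcases h with h | h | h | h | h <;> omega

theorem adj_lift (n : ℕ) (hn : 3 ≤ n) (s : ℕ) (v : ℕ × ℕ) (hv : 1 ≤ v.1) (hv4 : v.2 < 4)
    (y : FV n) (h : (flowerSnark n).Adj (prj n hn s v) y) :
    ∃ w ∈ cnb v, y = prj n hn s w := by
  obtain ⟨p, k⟩ := v
  obtain ⟨⟨r, hr⟩, t⟩ := y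
  simp only at hv hv4
  obtain ⟨p, rfl⟩ : ∃ p', p = p' + 1 := ⟨p - 1, by omega⟩
  have s1 := step n hn (p + s)
  have s2 := step n hn (p + s + 1)
  have m1 := succ_mod n r hr
  have m2 := succ_mod n ((p + s + 1) % n) (Nat.mod_lt _ (by omega))
  have hP : p + 1 + s = p + s + 1 := by omega
  have hP2 : p + 1 + 1 + s = p + s + 1 + 1 := by omega
  have ht : (t : ℕ) < 4 := t.2
  rw [flowerSnark, SimpleGraph.fromRel_adj] at h
  replace h := h.2
  have e0 : ((0 : Fin 4) : ℕ) = 0 := rfl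
  have e1 : ((1 : Fin 4) : ℕ) = 1 := rfl
  have e2 : ((2 : Fin 4) : ℕ) = 2 := rfl
  have e3 : ((3 : Fin 4) : ℕ) = 3 := rfl
  simp only [prj, ne_eq, Fin.ext_iff, sw_val, hP, e0, e1, e2, e3] at h
  have key : ∀ w : ℕ × ℕ, r = (w.1 + s) % n → (t : ℕ) = (if w.2 ≤ 1 then w.2 else
      2 + (w.2 + (w.1 + s) / n) % 2) → ((⟨r, hr⟩, t) : FV n) = prj n hn s w := by
    intro w h1 h2
    refine Prod.ext (Fin.ext h1) (Fin.ext ?_)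
    rw [h2]; simp only [prj, sw_val]
  have hT : ∀ q t : ℕ, t = (if k ≤ 1 then k else 2 + (k + q) % 2) ↔
      (k ≤ 1 ∧ t = k) ∨ (2 ≤ k ∧ t = 2 + (k + q) % 2) := by
    intro q t; split_ifs <;> omega
  have h1 := adj_core n r t _ _ _ _ _ _ k _ _ _ hn hr ht hv4 s1 s2 m1 m2
    ((hT _ _).1 rfl) h
  rcases h1 with ⟨rfl, h1, t0⟩ | ⟨hk0, h1⟩
  · by_cases t1 : (t : ℕ) = 1
    · exact ⟨(p + 1, 1), by simp [cnb], key _ (by simp only [hP]; exact h1) (by simp [t1])⟩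
    · by_cases t2 : (2 + (p + s + 1) / n) % 2 + 2 = (t : ℕ)
      · refine ⟨(p + 1, 2), by simp [cnb], key _ (by simp only [hP]; exact h1) ?_⟩
        simp only [hP]
        rw [if_neg (by omega)]
        omega
      · refine ⟨(p + 1, 3), by simp [cnb], key _ (by simp only [hP]; exact h1) ?_⟩
        simp only [hP]
        rw [if_neg (by omega)]
        generalize (p + s + 1) / n = q at *
        omega
  · simp only [← hT] at h1
    rcases h1 with h1 | h1 | h1
    · exact ⟨(p + 1, 0), by simp [cnb_def, hk0], key _ (by simp only [hP]; exact h1.1) h1.2⟩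
    · exact ⟨(p, k), by simp [cnb_def, hk0], key _ h1.1 h1.2⟩
    · refine ⟨(p + 1 + 1, k), by simp [cnb_def, hk0], key _ ?_ ?_⟩
      · simp only [hP2]; exact h1.1
      · simp only [hP2]; exact h1.2

theorem mod_ne (n : ℕ) (hn : 3 ≤ n) (P : ℕ) :
    P % n ≠ (P + 1) % n ∧ P % n ≠ (P + 2) % n ∧
    (P % n = (P + 3) % n → n = 3 ∧ (P + 3) / n = P / n + 1) := by
  have s1 := step n hn P
  have s2 := step n hn (P + 1)
  have s3 := step n hn (P + 2)
  rw [show P + 1 + 1 = P + 2 by omega] at s2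
  rw [show P + 2 + 1 = P + 3 by omega] at s3
  generalize P % n = r0 at *
  generalize (P + 1) % n = r1 at *
  generalize (P + 2) % n = r2 at *
  generalize (P + 3) % n = r3 at *
  generalize P / n = q0 at *
  generalize (P + 1) / n = q1 at *
  generalize (P + 2) / n = q2 at *
  generalize (P + 3) / n = q3 at *
  refine ⟨by omega, by omega, ?_⟩
  omega

theorem prj_inj (n : ℕ) (hn : 3 ≤ n) (s : ℕ) (w u v : ℕ × ℕ) (hw : 1 ≤ w.1) (hw4 : w.2 < 4)
    (hu : u ∈ cnb w) (hv : v ∈ cnb w) (h : prj n hn s u = prj n hn s v) : u = v := by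
  rw [prj_eq_iff _ _ _ _ _ (cnb_lt w u hw4 hu) (cnb_lt w v hw4 hv)] at h
  rw [cnb_iff _ _ hw] at hu hv
  obtain ⟨u1, u2⟩ := u
  obtain ⟨v1, v2⟩ := v
  obtain ⟨w1, w2⟩ := w
  simp only [Prod.mk.injEq] at *
  by_cases e : u1 = v1
  · subst e; omega
  · exfalso
    rcases Nat.lt_or_gt_of_ne e with e | e
    · obtain ⟨d, rfl⟩ := Nat.exists_eq_add_of_lt e
      have := mod_ne n hn (u1 + s)
      have hd : d = 0 ∨ d = 1 := by omega
      rcases hd with rfl | rfl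
      · omega
      · rw [show u1 + 1 + 1 + s = u1 + s + 2 by omega] at h; omega
    · obtain ⟨d, rfl⟩ := Nat.exists_eq_add_of_lt e
      have := mod_ne n hn (v1 + s)
      have hd : d = 0 ∨ d = 1 := by omega
      rcases hd with rfl | rfl
      · omega
      · rw [show v1 + 1 + 1 + s = v1 + s + 2 by omega] at h; omega

theorem prj_ne (n : ℕ) (hn : 3 ≤ n) (s : ℕ) (w u : ℕ × ℕ) (hw : 1 ≤ w.1) (hw4 : w.2 < 4)
    (hu : u ∈ cnb w) : prj n hn s u ≠ prj n hn s w := by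
  intro h
  rw [prj_eq_iff _ _ _ _ _ (cnb_lt w u hw4 hu) hw4] at h
  rw [cnb_iff _ _ hw] at hu
  obtain ⟨u1, u2⟩ := u
  obtain ⟨w1, w2⟩ := w
  simp only at *
  have a1 := (mod_ne n hn (u1 + s)).1
  have a2 := (mod_ne n hn (w1 + s)).1
  by_cases e : u1 = w1
  · omega
  · by_cases e' : u1 + 1 = w1
    · subst e'
      rw [show u1 + 1 + s = u1 + s + 1 by omega] at h; omega
    · obtain rfl : u1 = w1 + 1 := by omega
      rw [show w1 + 1 + s = w1 + s + 1 by omega] at h; omega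

theorem prj_tri (n : ℕ) (hn : 3 ≤ n) (s : ℕ) (w u v x : ℕ × ℕ) (hw : 2 ≤ w.1) (hw4 : w.2 < 4)
    (hu : u ∈ cnb w) (hv : v ∈ cnb w) (hx : x ∈ cnb u) (huv : u ≠ v)
    (h : prj n hn s x = prj n hn s v) : n = 3 ∧ v.2 = 1 ∧ w.2 = 1 ∧ u.2 = 1 := by
  have hu4 := cnb_lt w u hw4 hu
  rw [prj_eq_iff _ _ _ _ _ (cnb_lt u x hu4 hx) (cnb_lt w v hw4 hv)] at h
  rw [cnb_iff _ _ (by omega)] at hu hv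
  rw [cnb_iff _ _ (by omega)] at hx
  obtain ⟨u1, u2⟩ := u
  obtain ⟨v1, v2⟩ := v
  obtain ⟨w1, w2⟩ := w
  obtain ⟨x1, x2⟩ := x
  simp only [ne_eq, Prod.mk.injEq] at *
  rcases Nat.lt_trichotomy x1 v1 with e | e | e
  · obtain ⟨d, rfl⟩ := Nat.exists_eq_add_of_lt e
    have := mod_ne n hn (x1 + s)
    have hd : d = 0 ∨ d = 1 ∨ d = 2 := by clear h this; omega
    rcases hd with rfl | rfl | rfl
    · rw [show x1 + 0 + 1 + s = x1 + s + 1 by omega] at h; exact absurd h.1 this.1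
    · rw [show x1 + 1 + 1 + s = x1 + s + 2 by omega] at h; exact absurd h.1 this.2.1
    · rw [show x1 + 2 + 1 + s = x1 + s + 3 by omega] at h
      have h3 := this.2.2 h.1
      have h4 := h.2
      rw [h3.2] at h4
      generalize (x1 + s) / n = q at h4
      clear this h
      have : x2 = w2 ∧ v2 = w2 ∧ u2 = w2 := by clear h4 h3; omega
      omega
  · subst e
    generalize (x1 + s) / n = q at h
    have h2 := h.2
    clear h
    exfalso
    have huw : u1 + 1 = w1 ∨ u1 = w1 ∨ u1 = w1 + 1 := by clear hx hv h2 huv; omega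
    rcases huw with rfl | rfl | rfl <;> omega
  · obtain ⟨d, rfl⟩ := Nat.exists_eq_add_of_lt e
    have := mod_ne n hn (v1 + s)
    have hd : d = 0 ∨ d = 1 ∨ d = 2 := by clear h this; omega
    rcases hd with rfl | rfl | rfl
    · rw [show v1 + 0 + 1 + s = v1 + s + 1 by omega] at h; exact absurd h.1.symm this.1
    · rw [show v1 + 1 + 1 + s = v1 + s + 2 by omega] at h; exact absurd h.1.symm this.2.1
    · rw [show v1 + 2 + 1 + s = v1 + s + 3 by omega] at h
      have h3 := this.2.2 h.1.symm
      have h4 := h.2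
      rw [h3.2] at h4
      generalize (v1 + s) / n = q at h4
      clear this h
      have : x2 = w2 ∧ v2 = w2 ∧ u2 = w2 := by clear h4 h3; omega
      omega

theorem okAt_of_wrd (n : ℕ) (hn : 3 ≤ n) (s : ℕ) (f : FV n → ℕ) (hf : WeakRomanDominating n f)
    (v : ℕ × ℕ) (hv : 3 ≤ v.1) (hv4 : v.2 < 4) :
    okAt (decide (n = 3)) (fun x => f (prj n hn s x)) v = true := by
  simp only [okAt, eqv_iff, eqv_not_iff, Nat.ble_eq, Nat.beq_eq, Bool.or_eq_true, decide_eq_true_eq, List.any_eq_true, Bool.and_eq_true,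
    List.all_eq_true]
  by_cases h0 : 1 ≤ f (prj n hn s v)
  · exact Or.inl h0
  right
  obtain ⟨w', hadj, hw1, hund⟩ := hf.2.2 (prj n hn s v) (by omega)
  obtain ⟨w, hw, rfl⟩ := adj_lift n hn s v (by omega) hv4 w' hadj
  refine ⟨w, hw, ?_⟩
  by_cases h2 : 2 ≤ f (prj n hn s w)
  · exact Or.inl h2
  refine Or.inr ⟨hw1, fun u hu => ?_⟩
  have hw4 := cnb_lt v w hv4 hw
  have hu4 := cnb_lt w u hw4 hu
  have hwp : 2 ≤ w.1 := by rw [cnb_iff _ _ (by omega)] at hw; omega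
  have hup : 1 ≤ u.1 := by rw [cnb_iff _ _ (by omega)] at hu; omega
  have hvw : v ∈ cnb w := by
    rw [cnb_iff _ _ (by omega)] at hw ⊢; omega
  by_cases huv : u = v
  · exact Or.inl (Or.inl (Or.inl huv))
  by_cases hfu : 1 ≤ f (prj n hn s u)
  · exact Or.inl (Or.inl (Or.inr hfu))
  have n1 : prj n hn s u ≠ prj n hn s v := fun h =>
    huv (prj_inj n hn s w u v (by omega) hw4 hu hvw h)
  have n2 := prj_ne n hn s w u (by omega) hw4 hu
  have hU := hund (prj n hn s u)
  unfold Undefended at hU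
  simp only [n1, n2, if_false] at hU
  push Not at hU
  obtain ⟨y, hy, hgy⟩ := hU (by omega)
  obtain ⟨x, hx, rfl⟩ := adj_lift n hn s u hup hu4 y hy
  by_cases hxv : prj n hn s x = prj n hn s v
  · exact Or.inl (Or.inr (prj_tri n hn s w u v x hwp hw4 hu hvw hx huv hxv))
  · right
    refine ⟨x, hx, ?_⟩
    by_cases hxw : prj n hn s x = prj n hn s w
    · exfalso
      rw [if_neg hxv, if_pos hxw] at hgy
      omega
    · refine ⟨fun h => hxw (by rw [h]), ?_⟩
      rw [if_neg hxv, if_neg hxw] at hgy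
      omega

theorem weight_eq (n : ℕ) (hn : 3 ≤ n) (s : ℕ) (f : FV n → ℕ) (p m : ℕ)
    (h : (p + s) % n = m % n) :
    f (prj n hn s (p, 0)) + f (prj n hn s (p, 1)) + f (prj n hn s (p, 2)) +
      f (prj n hn s (p, 3)) = fCopyWeight f m := by
  have hm : m % n < n := Nat.mod_lt _ (by omega)
  have e : fCopyWeight f m = ∑ k : Fin 4, f (⟨m % n, hm⟩, k) := by
    unfold fCopyWeight
    rw [Finset.sum_filter, Fintype.sum_prod_type, Finset.sum_eq_single ⟨m % n, hm⟩]
    · simp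
    · intro b _ hb
      refine Finset.sum_eq_zero fun k _ => ?_
      rw [if_neg]
      intro h
      exact hb (Fin.ext h)
    · simp
  rw [e]
  simp only [Fin.sum_univ_four, prj, h]
  generalize (p + s) / n = q
  rcases Nat.mod_two_eq_zero_or_one q with hq | hq
  · have h2 : (2 + q) % 2 = 0 := by omega
    have h3 : (3 + q) % 2 = 1 := by omega
    simp [sw, h2, h3]
  · have h2 : (2 + q) % 2 = 1 := by omega
    have h3 : (3 + q) % 2 = 0 := by omega
    simp [sw, h2, h3]
    omega

theorem no_pattern (n : ℕ) (hn : 3 ≤ n) (f : FV n → ℕ) (hf : WeakRomanDominating n f)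
    (ex : Bool) (hex : ex = true ∨ n ≠ 3) (pat : List ℕ) (hp : refute ex pat [] = true) (i : ℕ)
    (h : ∀ j (hj : j < pat.length), (pat[j] = 1 ∨ pat[j] = 2) ∧
      fCopyWeight f (i + j) = pat[j]) : False := by
  refine refute_sound ex (fun x => f (prj n hn (i + n - 3) x)) (fun v => hf.1 _) ?_ pat 0 ?_ hp
  · intro p k hp hk
    have := okAt_of_wrd n hn (i + n - 3) f hf (p, k) hp hk
    rcases hex with rfl | hex
    · exact okAt_ex _ _ _ this
    · simp only [hex, decide_false] at this
      cases ex
      · exact this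
      · exact okAt_ex _ _ _ this
  · intro j hj
    refine ⟨(h j hj).1, ?_⟩
    rw [← (h j hj).2]
    refine weight_eq n hn _ f _ _ ?_
    rw [show 0 + j + 3 + (i + n - 3) = i + j + n by omega, Nat.add_mod_right]

/-- If `n ≥ 3` and `f` is a weak Roman dominating function on the flower snark
`J_n`, then `f` contains none of the patterns 111, 1121 (equivalently 1211 read
in reverse), or 1212121 of copy weights on consecutive copies
(indices mod `n`). -/
theorem flowerSnark_weakRoman_patterns (n : ℕ) (hn : 3 ≤ n)
    (f : FV n → ℕ) (hf : WeakRomanDominating n f) :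
    (¬ ∃ i : Fin n, fCopyWeight f (i : ℕ) = 1 ∧
        fCopyWeight f ((i : ℕ) + 1) = 1 ∧ fCopyWeight f ((i : ℕ) + 2) = 1) ∧
    (¬ ∃ i : Fin n, fCopyWeight f (i : ℕ) = 1 ∧
        fCopyWeight f ((i : ℕ) + 1) = 1 ∧ fCopyWeight f ((i : ℕ) + 2) = 2 ∧
        fCopyWeight f ((i : ℕ) + 3) = 1) ∧
    (¬ ∃ i : Fin n, fCopyWeight f (i : ℕ) = 1 ∧
        fCopyWeight f ((i : ℕ) + 1) = 2 ∧ fCopyWeight f ((i : ℕ) + 2) = 1 ∧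
        fCopyWeight f ((i : ℕ) + 3) = 1) ∧
    (¬ ∃ i : Fin n, fCopyWeight f (i : ℕ) = 1 ∧
        fCopyWeight f ((i : ℕ) + 1) = 2 ∧ fCopyWeight f ((i : ℕ) + 2) = 1 ∧
        fCopyWeight f ((i : ℕ) + 3) = 2 ∧ fCopyWeight f ((i : ℕ) + 4) = 1 ∧
        fCopyWeight f ((i : ℕ) + 5) = 2 ∧ fCopyWeight f ((i : ℕ) + 6) = 1) := by
  refine ⟨?_, ?_, ?_, ?_⟩
  · rintro ⟨i, h0, h1, h2⟩
    refine no_pattern n hn f hf true (Or.inl rfl) _ refute1 i ?_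
    intro j hj
    simp only [List.length_cons, List.length_nil] at hj
    interval_cases j <;> simp [h0, h1, h2]
  · rintro ⟨i, h0, h1, h2, h3⟩
    refine no_pattern n hn f hf true (Or.inl rfl) _ refute2 i ?_
    intro j hj
    simp only [List.length_cons, List.length_nil] at hj
    interval_cases j <;> simp [h0, h1, h2, h3]
  · rintro ⟨i, h0, h1, h2, h3⟩
    refine no_pattern n hn f hf true (Or.inl rfl) _ refute3 i ?_
    intro j hj
    simp only [List.length_cons, List.length_nil] at hj
    interval_cases j <;> simp [h0, h1, h2, h3]
  · rintro ⟨i, h0, h1, h2, h3, h4, h5, h6⟩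
    have hn3 : n ≠ 3 := by
      rintro rfl
      have : fCopyWeight f ((i : ℕ) + 3) = fCopyWeight f (i : ℕ) := by
        unfold fCopyWeight; rw [Nat.add_mod_right]
      omega
    refine no_pattern n hn f hf false (Or.inr hn3) _ refute4 i ?_
    intro j hj
    simp only [List.length_cons, List.length_nil] at hj
    interval_cases j <;> simp [h0, h1, h2, h3, h4, h5, h6]
end
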